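/- arXiv:2112.02553 — 3 statements merged into one kernel-verified Lean document; each statement's English description precedes it below -/
import Mathlib

section
/- Let R > 0 be the sweep-circle radius and S = (r_S, φ_S) a site with 0 ≤ r_S < R. For every point P = (r, φ) with r ≥ 0: dH(P, S) = R − r if and only if r = artanh((cosh R − cosh r_S)/(sinh R − sinh r_S · cos(φ − φ_S))). In other words, P lies on the beach ellipse of S exactly when its radial coordinate equals the beach-ellipse radius function f_S evaluated at its angular coordinate. -/
/-- Inverse hyperbolic cosine: `arcosh x = log (x + √(x² − 1))`. -/
noncomputable def arcosh (x : ℝ) : ℝ := Real.log (x + Real.sqrt (x ^ 2 - 1))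

/-- Inverse hyperbolic tangent: `artanh x = (1/2) · log ((1 + x)/(1 − x))`. -/
noncomputable def artanh (x : ℝ) : ℝ := (1 / 2) * Real.log ((1 + x) / (1 - x))

/-- Hyperbolic distance between points given in polar coordinates. -/
noncomputable def dH (r₁ φ₁ r₂ φ₂ : ℝ) : ℝ :=
  arcosh (Real.cosh r₁ * Real.cosh r₂ - Real.sinh r₁ * Real.sinh r₂ * Real.cos (φ₁ - φ₂))

/-!
By the hyperbolic law of cosines, `dH P S = R - r` means `r ≤ R` together with
`cosh (R - r) = cosh r * cosh r_S - sinh r * sinh r_S * cos (φ - φ_S)`. Expanding the left side, the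
equation is linear in `(cosh r, sinh r)`, so it prescribes `tanh r`. The condition `r ≤ R` is then
automatic: the prescribed value is at most `tanh R` because `1 ≤ cosh (dH Q S)` for the point
`Q = (R, φ)` of the sweep circle.
-/

section HyperbolicFunctions

open Real (cosh sinh tanh cos)

theorem arcosh_eq_real_arcosh : arcosh = Real.arcosh := rfl

theorem artanh_eq_real_artanh {x : ℝ} (hx : x ∈ Set.Icc (-1) 1) : artanh x = Real.artanh x :=
  (Real.artanh_eq_half_log hx).symm

theorem one_le_cosh_mul_cosh_sub_sinh_mul_sinh_mul_cos (a b θ : ℝ) :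
    1 ≤ cosh a * cosh b - sinh a * sinh b * cos θ := by
  have hadd : 0 ≤ (1 + cos θ) / 2 := by linarith [Real.neg_one_le_cos θ]
  have hsub : 0 ≤ (1 - cos θ) / 2 := by linarith [Real.cos_le_one θ]
  calc
    1 = (1 + cos θ) / 2 * 1 + (1 - cos θ) / 2 * 1 := by ring
    _ ≤ (1 + cos θ) / 2 * cosh (a - b) + (1 - cos θ) / 2 * cosh (a + b) := by
      gcongr <;> exact Real.one_le_cosh _
    _ = cosh a * cosh b - sinh a * sinh b * cos θ := by
      rw [Real.cosh_sub, Real.cosh_add]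
      ring

theorem cosh_sub_cosh_lt_sinh_sub_sinh {a b : ℝ} (h : b < a) :
    cosh a - cosh b < sinh a - sinh b := by
  have hexp : Real.exp (-a) < Real.exp (-b) := Real.exp_lt_exp.2 (neg_lt_neg h)
  rw [← Real.cosh_sub_sinh, ← Real.cosh_sub_sinh] at hexp
  linarith

theorem cosh_sub_cosh_lt_sinh_sub_sinh_mul_cos {a b : ℝ} (h : |b| < a) (θ : ℝ) :
    cosh a - cosh b < sinh a - sinh b * cos θ := by
  have hcos : sinh b * cos θ ≤ sinh |b| := by
    calc
      sinh b * cos θ ≤ |sinh b| * |cos θ| := (le_abs_self _).trans (abs_mul _ _).le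
      _ ≤ |sinh b| := mul_le_of_le_one_right (abs_nonneg _) (Real.abs_cos_le_one θ)
      _ = sinh |b| := Real.abs_sinh b
  have hlt := cosh_sub_cosh_lt_sinh_sub_sinh h
  rw [Real.cosh_abs] at hlt
  linarith

theorem cosh_sub_cosh_pos {a b : ℝ} (h : |b| < a) : 0 < cosh a - cosh b :=
  sub_pos.2 (Real.cosh_lt_cosh.2 (h.trans_le (le_abs_self a)))

theorem sinh_sub_sinh_mul_cos_pos {a b : ℝ} (h : |b| < a) (θ : ℝ) :
    0 < sinh a - sinh b * cos θ :=
  (cosh_sub_cosh_pos h).trans (cosh_sub_cosh_lt_sinh_sub_sinh_mul_cos h θ)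

theorem cosh_sub_cosh_div_sinh_sub_sinh_mul_cos_mem_Ioo {a b : ℝ} (h : |b| < a) (θ : ℝ) :
    (cosh a - cosh b) / (sinh a - sinh b * cos θ) ∈ Set.Ioo (-1) 1 :=
  have hden := sinh_sub_sinh_mul_cos_pos h θ
  ⟨neg_one_lt_zero.trans (div_pos (cosh_sub_cosh_pos h) hden),
    (div_lt_one hden).2 (cosh_sub_cosh_lt_sinh_sub_sinh_mul_cos h θ)⟩

theorem cosh_sub_eq_iff_tanh_eq_div {a b c r : ℝ} (h : sinh a - sinh b * c ≠ 0) :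
    cosh (a - r) = cosh r * cosh b - sinh r * sinh b * c ↔
      tanh r = (cosh a - cosh b) / (sinh a - sinh b * c) := by
  rw [Real.tanh_eq_sinh_div_cosh, div_eq_div_iff (Real.cosh_pos r).ne' h, Real.cosh_sub]
  constructor <;> intro heq <;> linarith

end HyperbolicFunctions

section Distance

open Real (cosh sinh cos)

variable (r₁ φ₁ r₂ φ₂ : ℝ)

theorem dH_nonneg : 0 ≤ dH r₁ φ₁ r₂ φ₂ := by
  rw [dH, arcosh_eq_real_arcosh]
  exact Real.arcosh_nonneg (one_le_cosh_mul_cosh_sub_sinh_mul_sinh_mul_cos r₁ r₂ (φ₁ - φ₂))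

theorem cosh_dH :
    cosh (dH r₁ φ₁ r₂ φ₂) = cosh r₁ * cosh r₂ - sinh r₁ * sinh r₂ * cos (φ₁ - φ₂) := by
  rw [dH, arcosh_eq_real_arcosh]
  exact Real.cosh_arcosh (one_le_cosh_mul_cosh_sub_sinh_mul_sinh_mul_cos r₁ r₂ (φ₁ - φ₂))

variable {r₁ φ₁ r₂ φ₂}

theorem dH_eq_iff {d : ℝ} :
    dH r₁ φ₁ r₂ φ₂ = d ↔
      0 ≤ d ∧ cosh d = cosh r₁ * cosh r₂ - sinh r₁ * sinh r₂ * cos (φ₁ - φ₂) := by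
  rw [← cosh_dH]
  constructor
  · rintro rfl
    exact ⟨dH_nonneg _ _ _ _, rfl⟩
  · rintro ⟨hd, hcosh⟩
    exact Real.cosh_injOn (dH_nonneg _ _ _ _) hd hcosh.symm

end Distance

section BeachEllipse

open Real (cosh sinh tanh cos)

/-- The beach-ellipse radius function `f_S(φ)` of the site `S = (rS, φS)`, for a sweep circle of
radius `R`. -/
noncomputable def beachEllipseRadius (R rS φS φ : ℝ) : ℝ :=
  artanh ((cosh R - cosh rS) / (sinh R - sinh rS * cos (φ - φS)))

variable {R rS : ℝ}

theorem tanh_beachEllipseRadius (h : |rS| < R) (φS φ : ℝ) :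
    tanh (beachEllipseRadius R rS φS φ) =
      (cosh R - cosh rS) / (sinh R - sinh rS * cos (φ - φS)) := by
  have hmem := cosh_sub_cosh_div_sinh_sub_sinh_mul_cos_mem_Ioo h (φ - φS)
  rw [beachEllipseRadius, artanh_eq_real_artanh (Set.Ioo_subset_Icc_self hmem),
    Real.tanh_artanh hmem]

theorem beachEllipseRadius_le (h : |rS| < R) (φS φ : ℝ) : beachEllipseRadius R rS φS φ ≤ R := by
  have htanh : tanh (beachEllipseRadius R rS φS φ) ≤ tanh R := by
    have hcosh : 1 ≤ cosh R * cosh rS - sinh R * sinh rS * cos (φ - φS) :=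
      one_le_cosh_mul_cosh_sub_sinh_mul_sinh_mul_cos R rS (φ - φS)
    rw [tanh_beachEllipseRadius h, Real.tanh_eq_sinh_div_cosh,
      div_le_div_iff₀ (sinh_sub_sinh_mul_cos_pos h _) (Real.cosh_pos R)]
    linarith [Real.cosh_sq R]
  simpa only [Real.artanh_tanh] using
    Real.artanh_le_artanh (Real.neg_one_lt_tanh _) (Real.tanh_lt_one _) htanh

theorem ellipse_curve_general (h : |rS| < R) (φS r φ : ℝ) :
    dH r φ rS φS = R - r ↔ r = beachEllipseRadius R rS φS φ := by
  have hden := (sinh_sub_sinh_mul_cos_pos h (φ - φS)).ne'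
  rw [dH_eq_iff, cosh_sub_eq_iff_tanh_eq_div hden, ← tanh_beachEllipseRadius h,
    Real.tanh_injective.eq_iff, and_iff_right_iff_imp, sub_nonneg]
  rintro rfl
  exact beachEllipseRadius_le h φS φ

end BeachEllipse

/-- A point `P = (r, φ)` is equidistant from the site `S = (r_S, φ_S)` and the sweep
circle of radius `R` centered at the pole if and only if its radial coordinate equals
the beach-ellipse radius function of `S` evaluated at `φ`. -/
theorem ellipse_curve (R rS φS : ℝ) (hR : 0 < R) (hrS₀ : 0 ≤ rS) (hrS : rS < R)
    (r φ : ℝ) (hr : 0 ≤ r) :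
    dH r φ rS φS = R - r ↔
      r = artanh ((Real.cosh R - Real.cosh rS) /
        (Real.sinh R - Real.sinh rS * Real.cos (φ - φS))) :=
  ellipse_curve_general ((abs_of_nonneg hrS₀).trans_lt hrS) φS r φ
end

section
/- Let R > 0 be the sweep-circle radius and let S = (r_S, φ_S) and T = (r_T, φ_T) be two distinct sites (i.e. r_S ≠ r_T, or φ_S − φ_T is not a multiple of 2π) with 0 < r_S ≤ r_T < R. Then the point P_i = (f_T(φ_T + π), φ_T + π) on the beach ellipse of T at angle φ_T + π lies strictly inside the beach ellipse of S, i.e. dH(P_i, S) < R − r(P_i); and the point P_o = (f_T(φ_T), φ_T) on the beach ellipse of T at angle φ_T lies strictly outside the beach ellipse of S, i.e. dH(P_o, S) > R − r(P_o). -/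
/-- Beach-ellipse radius function of a site `(r_S, φ_S)` for sweep radius `R`. -/
noncomputable def ellipseFun (R rS φS φ : ℝ) : ℝ :=
  artanh ((Real.cosh R - Real.cosh rS) /
    (Real.sinh R - Real.sinh rS * Real.cos (φ - φS)))

/-!
The endpoints of the beach ellipse of `T` on the line through the pole and `T` are `P_i`, at
distance `(R - r_T) / 2` behind the pole, and `P_o`, at distance `(R + r_T) / 2` in front of it.
Hence `R - r(P_i) = r(P_i) + r_T` and `R - r(P_o) = r(P_o) - r_T`, and both claims follow from
`r_S ≤ r_T` and the triangle inequality `|r(P) - r_S| ≤ dH(P, S) ≤ r(P) + r_S` through the pole.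
If `r_S = r_T`, strictness comes from the angles of `S` and `T` being different.
-/

theorem artanh_tanh (x : ℝ) : artanh (Real.tanh x) = x := by
  have hx : Real.tanh x ∈ Set.Icc (-1) 1 :=
    ⟨(Real.neg_one_lt_tanh x).le, (Real.tanh_lt_one x).le⟩
  exact (Real.artanh_eq_half_log hx).symm.trans (Real.artanh_tanh x)

theorem cosh_sub_cosh_eq_two_mul_sinh_mul_sinh (x y : ℝ) :
    Real.cosh x - Real.cosh y = 2 * Real.sinh ((x + y) / 2) * Real.sinh ((x - y) / 2) := by
  have hx : x = (x + y) / 2 + (x - y) / 2 := by ring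
  have hy : y = (x + y) / 2 - (x - y) / 2 := by ring
  calc
    Real.cosh x - Real.cosh y
        = Real.cosh ((x + y) / 2 + (x - y) / 2) - Real.cosh ((x + y) / 2 - (x - y) / 2) := by
      rw [← hx, ← hy]
    _ = 2 * Real.sinh ((x + y) / 2) * Real.sinh ((x - y) / 2) := by
      rw [Real.cosh_add, Real.cosh_sub]
      ring

theorem sinh_sub_sinh_eq_two_mul_cosh_mul_sinh (x y : ℝ) :
    Real.sinh x - Real.sinh y = 2 * Real.cosh ((x + y) / 2) * Real.sinh ((x - y) / 2) := by
  have hx : x = (x + y) / 2 + (x - y) / 2 := by ring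
  have hy : y = (x + y) / 2 - (x - y) / 2 := by ring
  calc
    Real.sinh x - Real.sinh y
        = Real.sinh ((x + y) / 2 + (x - y) / 2) - Real.sinh ((x + y) / 2 - (x - y) / 2) := by
      rw [← hx, ← hy]
    _ = 2 * Real.cosh ((x + y) / 2) * Real.sinh ((x - y) / 2) := by
      rw [Real.sinh_add, Real.sinh_sub]
      ring

theorem cosh_sub_cosh_div_sinh_sub_sinh {x y : ℝ} (hxy : x ≠ y) :
    (Real.cosh x - Real.cosh y) / (Real.sinh x - Real.sinh y) = Real.tanh ((x + y) / 2) := by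
  have hsinh : Real.sinh ((x - y) / 2) ≠ 0 := by
    simpa [Real.sinh_eq_zero, sub_eq_zero] using hxy
  rw [cosh_sub_cosh_eq_two_mul_sinh_mul_sinh, sinh_sub_sinh_eq_two_mul_cosh_mul_sinh,
    mul_div_mul_right _ _ hsinh, mul_div_mul_left _ _ two_ne_zero, Real.tanh_eq_sinh_div_cosh]

theorem ellipseFun_self {R r : ℝ} (φ : ℝ) (hr : R ≠ r) : ellipseFun R r φ φ = (R + r) / 2 := by
  rw [ellipseFun, sub_self, Real.cos_zero, mul_one, cosh_sub_cosh_div_sinh_sub_sinh hr,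
    artanh_tanh]

theorem ellipseFun_add_pi (R r φ ψ : ℝ) :
    ellipseFun R r φ (ψ + Real.pi) = ellipseFun R (-r) φ ψ := by
  simp only [ellipseFun, add_sub_right_comm, Real.cos_add_pi, Real.cosh_neg, Real.sinh_neg,
    mul_neg, neg_mul]

theorem ellipseFun_self_add_pi {R r : ℝ} (φ : ℝ) (hr : R ≠ -r) :
    ellipseFun R r φ (φ + Real.pi) = (R - r) / 2 := by
  rw [ellipseFun_add_pi, ellipseFun_self φ hr, sub_eq_add_neg]

theorem one_le_cosh_mul_cosh_sub_sinh_mul_sinh_mul_cos_s2 (r s θ : ℝ) :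
    1 ≤ Real.cosh r * Real.cosh s - Real.sinh r * Real.sinh s * Real.cos θ := by
  have hadd : 0 ≤ 1 + Real.cos θ := by linarith [Real.neg_one_le_cos θ]
  have hsub : 0 ≤ 1 - Real.cos θ := by linarith [Real.cos_le_one θ]
  calc
    1 = ((1 + Real.cos θ) * 1 + (1 - Real.cos θ) * 1) / 2 := by ring
    _ ≤ ((1 + Real.cos θ) * Real.cosh (r - s) + (1 - Real.cos θ) * Real.cosh (r + s)) / 2 := by
      gcongr <;> exact Real.one_le_cosh _
    _ = Real.cosh r * Real.cosh s - Real.sinh r * Real.sinh s * Real.cos θ := by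
      rw [Real.cosh_sub, Real.cosh_add]
      ring

theorem dH_nonneg_s2 (r φ s ψ : ℝ) : 0 ≤ dH r φ s ψ :=
  Real.arcosh_nonneg (one_le_cosh_mul_cosh_sub_sinh_mul_sinh_mul_cos_s2 r s (φ - ψ))

theorem cosh_dH_s2 (r φ s ψ : ℝ) : Real.cosh (dH r φ s ψ) =
    Real.cosh r * Real.cosh s - Real.sinh r * Real.sinh s * Real.cos (φ - ψ) :=
  Real.cosh_arcosh (one_le_cosh_mul_cosh_sub_sinh_mul_sinh_mul_cos_s2 r s (φ - ψ))

theorem cosh_dH_eq_cosh_add_sub (r φ s ψ : ℝ) : Real.cosh (dH r φ s ψ) =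
    Real.cosh (r + s) - Real.sinh r * Real.sinh s * (1 + Real.cos (φ - ψ)) := by
  rw [cosh_dH_s2, Real.cosh_add]
  ring

theorem cosh_dH_eq_cosh_sub_add (r φ s ψ : ℝ) : Real.cosh (dH r φ s ψ) =
    Real.cosh (r - s) + Real.sinh r * Real.sinh s * (1 - Real.cos (φ - ψ)) := by
  rw [cosh_dH_s2, Real.cosh_sub]
  ring

section PolarTriangleInequality

variable {r s : ℝ} (φ ψ : ℝ)

theorem dH_le_add (hr : 0 ≤ r) (hs : 0 ≤ s) : dH r φ s ψ ≤ r + s := by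
  have hcosh : Real.cosh (dH r φ s ψ) ≤ Real.cosh (r + s) := by
    have hsinh := mul_nonneg (Real.sinh_nonneg_iff.2 hr) (Real.sinh_nonneg_iff.2 hs)
    have hcos : 0 ≤ 1 + Real.cos (φ - ψ) := by linarith [Real.neg_one_le_cos (φ - ψ)]
    rw [cosh_dH_eq_cosh_add_sub]
    exact sub_le_self _ (mul_nonneg hsinh hcos)
  simpa only [abs_of_nonneg (dH_nonneg_s2 r φ s ψ), abs_of_nonneg (add_nonneg hr hs)]
    using Real.cosh_le_cosh.1 hcosh

theorem abs_sub_le_dH (hr : 0 ≤ r) (hs : 0 ≤ s) : |r - s| ≤ dH r φ s ψ := by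
  have hcosh : Real.cosh (r - s) ≤ Real.cosh (dH r φ s ψ) := by
    have hsinh := mul_nonneg (Real.sinh_nonneg_iff.2 hr) (Real.sinh_nonneg_iff.2 hs)
    have hcos : 0 ≤ 1 - Real.cos (φ - ψ) := sub_nonneg.2 (Real.cos_le_one _)
    rw [cosh_dH_eq_cosh_sub_add]
    exact le_add_of_nonneg_right (mul_nonneg hsinh hcos)
  simpa only [abs_of_nonneg (dH_nonneg_s2 r φ s ψ)] using Real.cosh_le_cosh.1 hcosh

variable {φ ψ}

theorem dH_lt_add (hr : 0 < r) (hs : 0 < s) (hφψ : Real.cos (φ - ψ) ≠ -1) :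
    dH r φ s ψ < r + s := by
  refine (dH_le_add φ ψ hr.le hs.le).lt_of_ne fun h ↦ hφψ ?_
  have hcosh := cosh_dH_eq_cosh_add_sub r φ s ψ
  rw [h, eq_comm, sub_eq_self] at hcosh
  have hsinh := (mul_pos (Real.sinh_pos_iff.2 hr) (Real.sinh_pos_iff.2 hs)).ne'
  linarith [(mul_eq_zero.1 hcosh).resolve_left hsinh]

theorem abs_sub_lt_dH (hr : 0 < r) (hs : 0 < s) (hφψ : Real.cos (φ - ψ) ≠ 1) :
    |r - s| < dH r φ s ψ := by
  refine (abs_sub_le_dH φ ψ hr.le hs.le).lt_of_ne fun h ↦ hφψ ?_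
  have hcosh := cosh_dH_eq_cosh_sub_add r φ s ψ
  rw [← h, Real.cosh_abs, left_eq_add] at hcosh
  have hsinh := (mul_pos (Real.sinh_pos_iff.2 hr) (Real.sinh_pos_iff.2 hs)).ne'
  linarith [(mul_eq_zero.1 hcosh).resolve_left hsinh]

end PolarTriangleInequality

theorem cos_sub_eq_one_iff (φ ψ : ℝ) :
    Real.cos (ψ - φ) = 1 ↔ ∃ k : ℤ, φ - ψ = 2 * Real.pi * k := by
  rw [← Real.cos_neg, neg_sub, Real.cos_eq_one_iff]
  simp only [mul_comm, eq_comm]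

/-- For two distinct sites `S`, `T` strictly inside the sweep circle with
`0 < r_S ≤ r_T < R`, the point of the beach ellipse of `T` at angle `φ_T + π` is
strictly inside the beach ellipse of `S`, and the point at angle `φ_T` is strictly
outside the beach ellipse of `S`. -/
theorem inside_outside (R rS φS rT φT : ℝ) (hR : 0 < R)
    (hdist : rS ≠ rT ∨ ¬ ∃ k : ℤ, φS - φT = 2 * Real.pi * k)
    (hrS : 0 < rS) (hST : rS ≤ rT) (hrT : rT < R) :
    dH (ellipseFun R rT φT (φT + Real.pi)) (φT + Real.pi) rS φS
        < R - ellipseFun R rT φT (φT + Real.pi) ∧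
      dH (ellipseFun R rT φT φT) φT rS φS > R - ellipseFun R rT φT φT := by
  rw [ellipseFun_self_add_pi φT (by linarith), ellipseFun_self φT hrT.ne']
  have hPi : 0 < (R - rT) / 2 := by linarith
  have hPo : 0 < (R + rT) / 2 := by linarith
  rcases hST.lt_or_eq with hlt | heq
  · constructor
    · calc
        _ ≤ (R - rT) / 2 + rS := dH_le_add _ _ hPi.le hrS.le
        _ < R - (R - rT) / 2 := by linarith
    · calc
        R - (R + rT) / 2 < (R + rT) / 2 - rS := by linarith
        _ ≤ _ := (le_abs_self _).trans (abs_sub_le_dH _ _ hPo.le hrS.le)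
  · have hcos : Real.cos (φT - φS) ≠ 1 :=
      (cos_sub_eq_one_iff φS φT).not.2 (hdist.resolve_left (not_not.2 heq))
    have hcos_pi : Real.cos (φT + Real.pi - φS) ≠ -1 := by
      rwa [add_sub_right_comm, Real.cos_add_pi, Ne, neg_inj]
    constructor
    · calc
        _ < (R - rT) / 2 + rS := dH_lt_add hPi hrS hcos_pi
        _ = R - (R - rT) / 2 := by rw [heq]; ring
    · calc
        R - (R + rT) / 2 = (R + rT) / 2 - rS := by rw [heq]; ring
        _ < _ := (le_abs_self _).trans_lt (abs_sub_lt_dH hPo hrS hcos)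
end

section
/- Let R > 0 be the sweep-circle radius and let S = (r_S, φ_S) and T = (r_T, φ_T) be two distinct sites (i.e. r_S ≠ r_T, or φ_S − φ_T is not a multiple of 2π) with 0 < r_S ≤ r_T < R. Then the set {φ ∈ [0, 2π) : f_S(φ) = f_T(φ)} has exactly two elements; that is, the two non-degenerate beach ellipses intersect in exactly two points. -/
/-!
Since `artanh` is injective on `(-1, 1)`, clearing denominators turns `f_S φ = f_T φ` into
`b sinh r_S cos (φ - φ_S) - a sinh r_T cos (φ - φ_T) = (b - a) sinh R`,
where `a = cosh R - cosh r_S` and `b = cosh R - cosh r_T`.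
The left side is a single sinusoid of some amplitude `ρ`, and
`ρ² - ((b - a) sinh R)² = 2 a b (cosh d(S, T) - 1)`, which is positive because `S ≠ T`;
so `(b - a) sinh R` lies strictly between `-ρ` and `ρ`, a level attained twice per period.
-/

section Sinusoid

theorem ncard_Ico_coe_mem_addCircle {𝕜 : Type*} [AddCommGroup 𝕜] [LinearOrder 𝕜]
    [IsOrderedAddMonoid 𝕜] [Archimedean 𝕜] {p : 𝕜} [Fact (0 < p)] (a : 𝕜)
    (s : Set (AddCircle p)) :
    {x ∈ Set.Ico a (a + p) | (x : AddCircle p) ∈ s}.ncard = s.ncard := by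
  have hinj : Set.InjOn ((↑) : 𝕜 → AddCircle p) {x ∈ Set.Ico a (a + p) | (x : AddCircle p) ∈ s} :=
    fun x hx y hy => (AddCircle.coe_eq_coe_iff_of_mem_Ico hx.1 hy.1).1
  have himage : ((↑) : 𝕜 → AddCircle p) '' {x ∈ Set.Ico a (a + p) | (x : AddCircle p) ∈ s} = s := by
    change (↑) '' (Set.Ico a (a + p) ∩ (↑) ⁻¹' s) = s
    rw [Set.image_inter_preimage, AddCircle.coe_image_Ico_eq, Set.univ_inter]
  rw [← hinj.ncard_image, himage]

theorem ncard_angle_cos_sub_eq {c : ℝ} (hc : |c| < 1) (ψ : Real.Angle) :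
    {θ : Real.Angle | (θ - ψ).cos = c}.ncard = 2 := by
  obtain ⟨hc_neg, hc_pos⟩ := abs_lt.1 hc
  obtain ⟨α, hα⟩ : ∃ α : Real.Angle, α.cos = c :=
    ⟨Real.arccos c, by rw [Real.Angle.cos_coe, Real.cos_arccos hc_neg.le hc_pos.le]⟩
  have hα_zero : α ≠ 0 := by
    rintro rfl
    exact hc_pos.ne' (Real.Angle.cos_zero.symm.trans hα)
  have hα_pi : α ≠ Real.pi := by
    rintro rfl
    exact hc_neg.ne (Real.Angle.cos_coe_pi.symm.trans hα)
  have hset : {θ : Real.Angle | (θ - ψ).cos = c} = {α + ψ, -α + ψ} := by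
    ext θ
    simp only [Set.mem_ofPred_eq, Set.mem_insert_iff, Set.mem_singleton_iff, ← hα,
      Real.Angle.cos_eq_iff_eq_or_eq_neg, sub_eq_iff_eq_add]
  have hne : α + ψ ≠ -α + ψ :=
    (add_left_injective ψ).ne (Real.Angle.ne_neg_self_iff.2 ⟨hα_zero, hα_pi⟩)
  rw [hset, Set.ncard_pair hne]

theorem ncard_Ico_cos_sub_eq {c : ℝ} (hc : |c| < 1) (a ψ : ℝ) :
    {φ ∈ Set.Ico a (a + 2 * Real.pi) | Real.cos (φ - ψ) = c}.ncard = 2 := by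
  have : Fact (0 < 2 * Real.pi) := ⟨Real.two_pi_pos⟩
  rw [← ncard_angle_cos_sub_eq hc ψ]
  exact ncard_Ico_coe_mem_addCircle a {θ : Real.Angle | (θ - ψ).cos = c}

theorem ncard_Ico_mul_cos_add_mul_sin_eq {P Q D : ℝ} (h : D ^ 2 < P ^ 2 + Q ^ 2) (a : ℝ) :
    {φ ∈ Set.Ico a (a + 2 * Real.pi) | P * Real.cos φ + Q * Real.sin φ = D}.ncard = 2 := by
  set z : ℂ := ⟨P, Q⟩
  have hnorm : ‖z‖ ^ 2 = P ^ 2 + Q ^ 2 := by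
    rw [Complex.sq_norm, Complex.normSq_mk]
    ring
  have hD : |D| < ‖z‖ := abs_lt_of_sq_lt_sq (hnorm ▸ h) (norm_nonneg z)
  have hz : 0 < ‖z‖ := (abs_nonneg D).trans_lt hD
  have hlevel : |D / ‖z‖| < 1 := by rwa [abs_div, abs_norm, div_lt_one hz]
  have hP : ‖z‖ * Real.cos z.arg = P := Complex.norm_mul_cos_arg z
  have hQ : ‖z‖ * Real.sin z.arg = Q := Complex.norm_mul_sin_arg z
  have hsinusoid (φ : ℝ) :
      P * Real.cos φ + Q * Real.sin φ = Real.cos (φ - z.arg) * ‖z‖ := by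
    rw [Real.cos_sub]
    linear_combination -Real.cos φ * hP - Real.sin φ * hQ
  simp only [hsinusoid, ← eq_div_iff hz.ne']
  exact ncard_Ico_cos_sub_eq hlevel a z.arg

theorem ncard_Ico_mul_cos_sub_sub_mul_cos_sub_eq {A B α β D : ℝ}
    (h : D ^ 2 < A ^ 2 + B ^ 2 - 2 * A * B * Real.cos (α - β)) (a : ℝ) :
    {φ ∈ Set.Ico a (a + 2 * Real.pi) |
      A * Real.cos (φ - α) - B * Real.cos (φ - β) = D}.ncard = 2 := by
  set P := A * Real.cos α - B * Real.cos β
  set Q := A * Real.sin α - B * Real.sin β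
  have hamplitude : A ^ 2 + B ^ 2 - 2 * A * B * Real.cos (α - β) = P ^ 2 + Q ^ 2 := by
    rw [Real.cos_sub]
    linear_combination -A ^ 2 * Real.sin_sq_add_cos_sq α - B ^ 2 * Real.sin_sq_add_cos_sq β
  have hexpand (φ : ℝ) : A * Real.cos (φ - α) - B * Real.cos (φ - β) =
      P * Real.cos φ + Q * Real.sin φ := by
    rw [Real.cos_sub, Real.cos_sub]
    ring
  simp only [hexpand]
  exact ncard_Ico_mul_cos_add_mul_sin_eq (hamplitude ▸ h) a

end Sinusoid

section HypDist

variable (r₁ φ₁ r₂ φ₂ : ℝ)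

/-- Hyperbolic distance between the points with polar coordinates `(r₁, φ₁)` and `(r₂, φ₂)`,
used to express that two sites are distinct. Radii may be negative, with `(-r, φ)` denoting the
same point as `(r, φ + π)`. -/
noncomputable def hypDist : ℝ :=
  Real.arcosh (Real.cosh r₁ * Real.cosh r₂ -
    Real.sinh r₁ * Real.sinh r₂ * Real.cos (φ₁ - φ₂))

theorem cosh_hypDist :
    Real.cosh (hypDist r₁ φ₁ r₂ φ₂) = Real.cosh r₁ * Real.cosh r₂ -
      Real.sinh r₁ * Real.sinh r₂ * Real.cos (φ₁ - φ₂) := by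
  refine Real.cosh_arcosh ?_
  have hsub := Real.cosh_sub r₁ r₂ ▸ Real.one_le_cosh (r₁ - r₂)
  have hadd := Real.cosh_add r₁ r₂ ▸ Real.one_le_cosh (r₁ + r₂)
  have hcos := Real.abs_cos_le_one (φ₁ - φ₂)
  have hprod : |Real.sinh r₁ * Real.sinh r₂ * Real.cos (φ₁ - φ₂)| ≤
      |Real.sinh r₁ * Real.sinh r₂| := by
    rw [abs_mul]
    exact mul_le_of_le_one_right (abs_nonneg _) hcos
  have hmax : |Real.sinh r₁ * Real.sinh r₂| ≤ Real.cosh r₁ * Real.cosh r₂ - 1 :=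
    abs_le.2 ⟨by linarith, by linarith⟩
  linarith [le_of_abs_le (hprod.trans hmax)]

variable {r₁ φ₁ r₂ φ₂}

theorem hypDist_ne_zero (hr₁ : 0 < r₁) (hr₂ : 0 < r₂)
    (h : r₁ ≠ r₂ ∨ ¬ ∃ k : ℤ, φ₁ - φ₂ = 2 * Real.pi * k) : hypDist r₁ φ₁ r₂ φ₂ ≠ 0 := by
  have hsinh : 0 < Real.sinh r₁ * Real.sinh r₂ :=
    mul_pos (Real.sinh_pos_iff.2 hr₁) (Real.sinh_pos_iff.2 hr₂)
  have hsplit : Real.cosh (hypDist r₁ φ₁ r₂ φ₂) = Real.cosh (r₁ - r₂) +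
      Real.sinh r₁ * Real.sinh r₂ * (1 - Real.cos (φ₁ - φ₂)) := by
    rw [cosh_hypDist, Real.cosh_sub]
    ring
  have hcos : 0 ≤ 1 - Real.cos (φ₁ - φ₂) := sub_nonneg.2 (Real.cos_le_one _)
  rw [← Real.one_lt_cosh, hsplit]
  rcases h with hr | hφ
  · exact lt_add_of_lt_of_nonneg (Real.one_lt_cosh.2 (sub_ne_zero.2 hr))
      (mul_nonneg hsinh.le hcos)
  · have hcos_ne : Real.cos (φ₁ - φ₂) ≠ 1 := fun hcos_eq =>
      hφ (((Real.cos_eq_one_iff _).1 hcos_eq).imp fun k hk => by rw [← hk, mul_comm])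
    exact lt_add_of_le_of_pos (Real.one_le_cosh _)
      (mul_pos hsinh (hcos.lt_of_ne' (sub_ne_zero.2 hcos_ne.symm)))

end HypDist

section BeachEllipse

theorem artanh_injOn_Ioo : Set.InjOn artanh (Set.Ioo (-1) 1) :=
  Real.artanh_injOn.congr fun _ hx => Real.artanh_eq_half_log (Set.Ioo_subset_Icc_self hx)

variable {R r rS φS rT φT : ℝ}

theorem cosh_sub_cosh_pos_s3 (h : |r| < R) : 0 < Real.cosh R - Real.cosh r :=
  sub_pos.2 (Real.cosh_lt_cosh.2 (h.trans_le (le_abs_self R)))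

theorem sinh_mul_cos_le_sinh_abs (r φ : ℝ) : Real.sinh r * Real.cos φ ≤ Real.sinh |r| := by
  rw [← Real.abs_sinh]
  refine (le_abs_self _).trans ?_
  rw [abs_mul]
  exact mul_le_of_le_one_right (abs_nonneg _) (Real.abs_cos_le_one φ)

theorem sinh_sub_sinh_mul_cos_pos_s3 (h : |r| < R) (φ : ℝ) :
    0 < Real.sinh R - Real.sinh r * Real.cos φ :=
  sub_pos.2 ((sinh_mul_cos_le_sinh_abs r φ).trans_lt (Real.sinh_lt_sinh.2 h))

theorem cosh_sub_cosh_lt_sinh_sub_sinh_mul_cos_s3 (h : |r| < R) (φ : ℝ) :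
    Real.cosh R - Real.cosh r < Real.sinh R - Real.sinh r * Real.cos φ := by
  have hexp : Real.cosh R - Real.sinh R < Real.cosh |r| - Real.sinh |r| := by
    simpa only [Real.cosh_sub_sinh, Real.exp_lt_exp, neg_lt_neg_iff] using h
  rw [Real.cosh_abs] at hexp
  linarith [sinh_mul_cos_le_sinh_abs r φ]

theorem ellipseFun_arg_mem_Ioo (h : |r| < R) (φ : ℝ) :
    (Real.cosh R - Real.cosh r) / (Real.sinh R - Real.sinh r * Real.cos φ) ∈
      Set.Ioo (-1) 1 := by
  have hden := sinh_sub_sinh_mul_cos_pos_s3 h φ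
  exact ⟨neg_one_lt_zero.trans (div_pos (cosh_sub_cosh_pos_s3 h) hden),
    (div_lt_one hden).2 (cosh_sub_cosh_lt_sinh_sub_sinh_mul_cos_s3 h φ)⟩

theorem ellipseFun_eq_ellipseFun_iff (hS : |rS| < R) (hT : |rT| < R) (φ : ℝ) :
    ellipseFun R rS φS φ = ellipseFun R rT φT φ ↔
      (Real.cosh R - Real.cosh rT) * Real.sinh rS * Real.cos (φ - φS) -
        (Real.cosh R - Real.cosh rS) * Real.sinh rT * Real.cos (φ - φT) =
      (Real.cosh rS - Real.cosh rT) * Real.sinh R := by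
  unfold ellipseFun
  rw [artanh_injOn_Ioo.eq_iff (ellipseFun_arg_mem_Ioo hS _) (ellipseFun_arg_mem_Ioo hT _),
    div_eq_div_iff (sinh_sub_sinh_mul_cos_pos_s3 hS _).ne' (sinh_sub_sinh_mul_cos_pos_s3 hT _).ne']
  constructor <;> intro h <;> linarith

theorem amplitude_sq_sub_level_sq (R rS φS rT φT : ℝ) :
    ((Real.cosh R - Real.cosh rT) * Real.sinh rS) ^ 2 +
        ((Real.cosh R - Real.cosh rS) * Real.sinh rT) ^ 2 -
        2 * ((Real.cosh R - Real.cosh rT) * Real.sinh rS) *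
          ((Real.cosh R - Real.cosh rS) * Real.sinh rT) * Real.cos (φS - φT) -
        ((Real.cosh rS - Real.cosh rT) * Real.sinh R) ^ 2 =
      2 * (Real.cosh R - Real.cosh rS) * (Real.cosh R - Real.cosh rT) *
        (Real.cosh (hypDist rS φS rT φT) - 1) := by
  rw [cosh_hypDist]
  linear_combination (Real.cosh R - Real.cosh rS) ^ 2 * Real.sinh_sq rT +
    (Real.cosh R - Real.cosh rT) ^ 2 * Real.sinh_sq rS -
    (Real.cosh rT - Real.cosh rS) ^ 2 * Real.sinh_sq R

theorem ellipse_intersections_general (hS : |rS| < R) (hT : |rT| < R)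
    (hdist : hypDist rS φS rT φT ≠ 0) :
    {φ ∈ Set.Ico 0 (2 * Real.pi) |
        ellipseFun R rS φS φ = ellipseFun R rT φT φ}.ncard = 2 := by
  have hpos : 0 < 2 * (Real.cosh R - Real.cosh rS) * (Real.cosh R - Real.cosh rT) *
      (Real.cosh (hypDist rS φS rT φT) - 1) :=
    mul_pos (mul_pos (mul_pos two_pos (cosh_sub_cosh_pos_s3 hS)) (cosh_sub_cosh_pos_s3 hT))
      (sub_pos.2 (Real.one_lt_cosh.2 hdist))
  rw [← amplitude_sq_sub_level_sq, sub_pos] at hpos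
  simpa only [ellipseFun_eq_ellipseFun_iff hS hT, zero_add] using
    ncard_Ico_mul_cos_sub_sub_mul_cos_sub_eq hpos 0

end BeachEllipse

/-- The beach ellipses of two distinct sites `S`, `T` with `0 < r_S ≤ r_T < R`
intersect in exactly two points: there are exactly two angles `φ ∈ [0, 2π)` at which
the two beach-ellipse radius functions agree. -/
theorem ellipse_intersections (R rS φS rT φT : ℝ) (hR : 0 < R)
    (hdist : rS ≠ rT ∨ ¬ ∃ k : ℤ, φS - φT = 2 * Real.pi * k)
    (hrS : 0 < rS) (hST : rS ≤ rT) (hrT : rT < R) :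
    {φ ∈ Set.Ico 0 (2 * Real.pi) |
        ellipseFun R rS φS φ = ellipseFun R rT φT φ}.ncard = 2 := by
  have hT : 0 < rT := hrS.trans_le hST
  have hSR : rS < R := hST.trans_lt hrT
  exact ellipse_intersections_general (by rwa [abs_of_pos hrS]) (by rwa [abs_of_pos hT])
    (hypDist_ne_zero hrS hT hdist)
end
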